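/- Let v be quasi-definite with SMOP (P_n), recurrence coefficients (a_n, b_n), and associated first-kind polynomials (P^{(1)}_n); let v̂ with (x−c)v̂ = v be a Geronimus transformation with v̂_0 ≠ 0, and set S_n(x) = P_n(x) + (v_0/v̂_0)·P^{(1)}_{n−1}(x). Then (S_n)_{n≥0} is the co-recursive sequence of parameter α = −v_0/v̂_0 with respect to v: S_0 = 1, S_1(x) = P_1(x) − α, and x·S_n = S_{n+1} + b_n·S_n + a_n·S_{n−1} for all n ≥ 1. Moreover, if v^α is a linear functional whose SMOP is (S_n), then v^α = (v^α_0/v_0)·(v^{-1} − (1/v̂_0)·δ′_0)^{-1}; equivalently, for all n ≥ 0, Σ_{k=0}^n v^α_k·w_{n−k} = (v^α_0/v_0)·δ_{n,0}, where w_n = (v^{-1})_n + (1/v̂_0)·δ_{n,1}. -/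

import Mathlib

open Polynomial

noncomputable section

/-- Apply a linear functional (identified with its moment sequence) to a polynomial:
`⟨u, p⟩ = Σ_k c_k u_k` for `p = Σ_k c_k x^k`. -/
def fapply (u : ℕ → ℂ) (p : Polynomial ℂ) : ℂ := p.sum fun k ck => ck * u k

/-- `P` is the sequence of monic orthogonal polynomials (SMOP) of the functional `u`. -/
def IsSMOP (u : ℕ → ℂ) (P : ℕ → Polynomial ℂ) : Prop :=
  (∀ n, (P n).Monic) ∧ (∀ n, (P n).natDegree = n) ∧
    (∀ n m, n ≠ m → fapply u (P n * P m) = 0) ∧ (∀ n, fapply u (P n * P n) ≠ 0)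

/-- A functional is quasi-definite iff it admits a SMOP. -/
def IsQuasiDefinite (u : ℕ → ℂ) : Prop := ∃ P, IsSMOP u P

/-- Three term recurrence relation `x P_n = P_{n+1} + b_n P_n + a_n P_{n-1}`,
with `P_{-1} = 0`, `P_0 = 1`. -/
def HasTTRR (P : ℕ → Polynomial ℂ) (a b : ℕ → ℂ) : Prop :=
  P 0 = 1 ∧ X * P 0 = P 1 + C (b 0) * P 0 ∧
    ∀ n, 1 ≤ n → X * P n = P (n + 1) + C (b n) * P n + C (a n) * P (n - 1)

/-- Wronskian `W(p,q)(x) = p(x) q'(x) - p'(x) q(x)`. -/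
def Wr (p q : Polynomial ℂ) (x : ℂ) : ℂ :=
  p.eval x * (derivative q).eval x - (derivative p).eval x * q.eval x

/-- The monic Jacobi matrix with diagonal `b`, superdiagonal `1` and subdiagonal
entries `J_{n+1,n} = a_{n+1}`. -/
def jacobi (a b : ℕ → ℂ) (i j : ℕ) : ℂ :=
  if i = j then b i else if j = i + 1 then 1 else if i = j + 1 then a i else 0

/-- Entrywise product of semi-infinite (banded) matrices; the sum has finite support. -/
def mprod (A B : ℕ → ℕ → ℂ) (i j : ℕ) : ℂ := ∑' k, A i k * B k j

/-- `w` is the moment sequence of the inverse functional `u⁻¹`: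
the convolution of the moments of `u` and `w` is `(1,0,0,…)`. -/
def IsInverseMoments (u w : ℕ → ℂ) : Prop :=
  ∀ n, ∑ k ∈ Finset.range (n + 1), u k * w (n - k) = if n = 0 then 1 else 0

/-- Apply a functional `u` to the second (outer) variable `y` of a bivariate polynomial
`D = Σ_k q_k(x) y^k`, giving `Σ_k u_k q_k(x)`. -/
def fapplyY (u : ℕ → ℂ) (D : Polynomial (Polynomial ℂ)) : Polynomial ℂ :=
  D.sum fun k q => u k • q

/-- `P^{(1)}_{n-1}`, with the convention `P^{(1)}_{-1} = 0`. -/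
def P1prev (P1 : ℕ → Polynomial ℂ) (n : ℕ) : Polynomial ℂ :=
  if n = 0 then 0 else P1 (n - 1)


def rs (n : ℕ) (p : Polynomial ℂ) : PowerSeries ℂ :=
  PowerSeries.mk fun i => if i ≤ n then p.coeff (n - i) else 0

lemma rs_add (n : ℕ) (p q : Polynomial ℂ) : rs n (p + q) = rs n p + rs n q := by
  ext i
  simp only [rs, PowerSeries.coeff_mk, map_add, coeff_add]
  split_ifs <;> simp

lemma rs_C_mul (n : ℕ) (r : ℂ) (p : Polynomial ℂ) :
    rs n (C r * p) = PowerSeries.C r * rs n p := by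
  ext i
  simp only [rs, PowerSeries.coeff_mk, PowerSeries.coeff_C_mul, coeff_C_mul]
  split_ifs <;> simp

lemma rs_X_mul (n : ℕ) (p : Polynomial ℂ) : rs (n + 1) (X * p) = rs n p := by
  ext i
  simp only [rs, PowerSeries.coeff_mk]
  rcases lt_trichotomy i (n + 1) with h | h | h
  · rw [if_pos (by omega), if_pos (by omega), show n + 1 - i = (n - i) + 1 by omega, coeff_X_mul]
  · subst h; simp
  · rw [if_neg (by omega), if_neg (by omega)]

lemma rs_X_pow_mul (n j : ℕ) (p : Polynomial ℂ) : rs (n + j) (X ^ j * p) = rs n p := by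
  induction j with
  | zero => simp
  | succ j ih => rw [← add_assoc, pow_succ', mul_assoc, rs_X_mul, ih]

lemma rs_succ (n : ℕ) (p : Polynomial ℂ) (hp : p.natDegree ≤ n) :
    rs (n + 1) p = PowerSeries.X * rs n p := by
  ext i
  cases i with
  | zero =>
    simp only [rs, PowerSeries.coeff_mk, PowerSeries.coeff_zero_X_mul]
    simp only [zero_le, if_true, Nat.sub_zero]
    exact coeff_eq_zero_of_natDegree_lt (by omega)
  | succ i =>
    rw [PowerSeries.coeff_succ_X_mul]
    simp [rs]

lemma fapply_eq (u : ℕ → ℂ) (p : Polynomial ℂ) (n : ℕ) (hp : p.natDegree ≤ n) :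
    fapply u p = ∑ i ∈ Finset.range (n + 1), p.coeff i * u i :=
  Polynomial.sum_over_range' p (by simp) (n + 1) (by omega)

lemma fapply_add (u : ℕ → ℂ) (p q : Polynomial ℂ) :
    fapply u (p + q) = fapply u p + fapply u q :=
  Polynomial.sum_add_index p q _ (by simp) (by intros; ring)

lemma fapply_C_mul (u : ℕ → ℂ) (r : ℂ) (p : Polynomial ℂ) :
    fapply u (C r * p) = r * fapply u p := by
  rw [fapply_eq u p p.natDegree le_rfl, fapply_eq u _ p.natDegree (natDegree_C_mul_le _ _),
    Finset.mul_sum]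
  simp [mul_assoc]

lemma coeff_rs (u : ℕ → ℂ) (n : ℕ) (p : Polynomial ℂ) (hp : p.natDegree ≤ n) :
    PowerSeries.coeff n (PowerSeries.mk u * rs n p) = fapply u p := by
  rw [fapply_eq u p n hp, PowerSeries.coeff_mul, Finset.Nat.sum_antidiagonal_eq_sum_range_succ_mk]
  refine Finset.sum_congr rfl fun i hi => ?_
  have : i ≤ n := by simpa [Nat.lt_succ_iff] using hi
  simp only [rs, PowerSeries.coeff_mk]
  rw [if_pos (by omega), show n - (n - i) = i by omega, mul_comm]

lemma orth (u : ℕ → ℂ) (P : ℕ → Polynomial ℂ) (hP : IsSMOP u P) (n d : ℕ) (hd : d ≤ n) :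
    ∀ q : Polynomial ℂ, q.degree < d → fapply u (P n * q) = 0 := by
  obtain ⟨hm, hdeg, ho, -⟩ := hP
  induction d with
  | zero =>
    intro q hq
    have : q = 0 := by
      ext i; simpa using (degree_lt_iff_coeff_zero q 0).1 hq i (Nat.zero_le _)
    subst this
    simp [fapply]
  | succ d ih =>
    intro q hq
    rw [degree_lt_iff_coeff_zero] at hq
    have h1 : q = (q + C (- q.coeff d) * P d) + C (q.coeff d) * P d := by
      rw [C_neg]; ring
    have h2 : fapply u (P n * (q + C (- q.coeff d) * P d)) = 0 := by
      apply ih (by omega)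
      rw [degree_lt_iff_coeff_zero]
      intro m hmd
      rw [coeff_add, coeff_C_mul]
      rcases eq_or_lt_of_le hmd with h | h
      · subst h
        have : (P d).coeff d = 1 := by
          have := hm d
          rwa [Monic, leadingCoeff, hdeg] at this
        rw [this]; ring
      · rw [hq m (by omega), coeff_eq_zero_of_natDegree_lt (p := P d) (n := m) (by rw [hdeg]; exact h)]; ring
    rw [h1, mul_add, fapply_add, h2, mul_left_comm, fapply_C_mul, ho n d (by omega)]
    ring

lemma ttrr_deg (P : ℕ → Polynomial ℂ) (a b : ℕ → ℂ) (h : HasTTRR P a b) :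
    ∀ n, (P n).natDegree ≤ n := by
  obtain ⟨h0, h1, h2⟩ := h
  intro n
  induction n using Nat.strong_induction_on with
  | _ n ih =>
    match n, ih with
    | 0, _ => simp [h0]
    | 1, _ =>
      have : P 1 = X * 1 - C (b 0) * 1 := by rw [h0] at h1; rw [h1]; ring
      rw [this]; compute_degree
    | n + 2, ih =>
      have h3 := h2 (n + 1) (by omega)
      have h4 : P (n + 2) = X * P (n + 1) - C (b (n + 1)) * P (n + 1) - C (a (n + 1)) * P n := by
        simp only [Nat.add_sub_cancel] at h3
        rw [h3]; ring
      have i1 := ih (n + 1) (by omega)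
      have i0 := ih n (by omega)
      rw [h4]
      refine (natDegree_sub_le_of_le (natDegree_sub_le_of_le (n := n + 2) (m := n + 2) ?_ ?_)
        (n := n + 2) ?_).trans (by simp)
      · exact natDegree_mul_le.trans (by rw [natDegree_X]; omega)
      · exact (natDegree_C_mul_le _ _).trans (by omega)
      · exact (natDegree_C_mul_le _ _).trans (by omega)

lemma rs_rec (P : ℕ → Polynomial ℂ) (a b : ℕ → ℂ) (h : HasTTRR P a b) (n : ℕ) :
    rs (n + 2) (P (n + 2)) = (1 - PowerSeries.C (b (n + 1)) * PowerSeries.X) * rs (n + 1) (P (n + 1))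
      - PowerSeries.C (a (n + 1)) * PowerSeries.X ^ 2 * rs n (P n) := by
  have hd := ttrr_deg P a b h
  have h3 := congrArg (rs (n + 2)) (h.2.2 (n + 1) (by omega))
  simp only [Nat.add_sub_cancel] at h3
  rw [rs_X_mul, rs_add, rs_add, rs_C_mul, rs_C_mul, rs_succ (n + 1) (P (n + 1)) (hd _),
    rs_succ (n + 1) (P n) ((hd _).trans (by omega)), rs_succ n (P n) (hd _)] at h3
  linear_combination -h3

lemma rs_one_rec (P : ℕ → Polynomial ℂ) (a b : ℕ → ℂ) (h : HasTTRR P a b) :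
    rs 0 (P 0) = 1 ∧ rs 1 (P 1) = 1 - PowerSeries.C (b 0) * PowerSeries.X := by
  have hd := ttrr_deg P a b h
  have h0 : rs 0 (P 0) = 1 := by
    rw [h.1]; ext i
    cases i <;> simp [rs, PowerSeries.coeff_one]
  refine ⟨h0, ?_⟩
  have h3 := congrArg (rs 1) h.2.1
  rw [rs_X_mul, rs_add, rs_C_mul, rs_succ 0 (P 0) (hd _), h0] at h3
  linear_combination -h3

lemma key (u : ℕ → ℂ) (P P1 : ℕ → Polynomial ℂ) (a b : ℕ → ℂ) (hP : IsSMOP u P)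
    (h : HasTTRR P a b) (h1 : HasTTRR P1 (fun n => a (n + 1)) (fun n => b (n + 1))) (n : ℕ) :
    (PowerSeries.X : PowerSeries ℂ) ^ (2 * (n + 1)) ∣
      PowerSeries.mk u * rs (n + 1) (P (n + 1)) - PowerSeries.C (u 0) * rs n (P1 n) := by
  have high : ∀ n, (PowerSeries.X : PowerSeries ℂ) ^ (n + 1) ∣
      PowerSeries.mk u * rs (n + 1) (P (n + 1)) - PowerSeries.C (u 0) * rs n (P1 n) →
      (PowerSeries.X : PowerSeries ℂ) ^ (2 * (n + 1)) ∣
      PowerSeries.mk u * rs (n + 1) (P (n + 1)) - PowerSeries.C (u 0) * rs n (P1 n) := by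
    intro n hn
    rw [PowerSeries.X_pow_dvd_iff] at hn ⊢
    intro m hm
    by_cases hlt : m < n + 1
    · exact hn m hlt
    · obtain ⟨j, rfl⟩ := Nat.exists_eq_add_of_le (not_lt.1 hlt)
      have hz : PowerSeries.coeff (n + 1 + j) (rs n (P1 n)) = 0 := by
        simp only [rs, PowerSeries.coeff_mk]; rw [if_neg (by omega)]
      rw [map_sub, PowerSeries.coeff_C_mul, hz, ← rs_X_pow_mul (n + 1) j, coeff_rs, mul_comm,
        orth u P hP (n + 1) (n + 1) le_rfl]
      · ring
      · rw [degree_X_pow]; exact_mod_cast (by omega : j < n + 1)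
      · refine natDegree_mul_le.trans ?_
        rw [natDegree_X_pow, hP.2.1]; omega
  obtain ⟨p0, p1⟩ := rs_one_rec P a b h
  obtain ⟨q0, q1⟩ := rs_one_rec P1 _ _ h1
  induction n using Nat.strong_induction_on with
  | _ n ih =>
    apply high
    match n, ih with
    | 0, _ =>
      rw [q0, p1, zero_add, pow_one, PowerSeries.X_dvd_iff]
      simp
    | 1, ih =>
      have i0 := ih 0 (by omega)
      rw [rs_rec P a b h 0, p0, q1]
      rw [q0] at i0
      obtain ⟨r, hr⟩ := i0
      refine ⟨(1 - PowerSeries.C (b 1) * PowerSeries.X) * r - PowerSeries.C (a 1) *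
        PowerSeries.mk u, ?_⟩
      simp only [zero_add, mul_one] at hr ⊢
      linear_combination (1 - PowerSeries.C (b 1) * PowerSeries.X) * hr
    | n + 2, ih =>
      obtain ⟨r, hr⟩ := ih n (by omega)
      obtain ⟨s, hs⟩ := ih (n + 1) (by omega)
      rw [rs_rec P a b h (n + 1), rs_rec P1 _ _ h1 n]
      refine ⟨(1 - PowerSeries.C (b (n + 2)) * PowerSeries.X) * PowerSeries.X ^ (n + 1) * s
        - PowerSeries.C (a (n + 2)) * PowerSeries.X ^ (n + 1) * r, ?_⟩
      linear_combination (1 - PowerSeries.C (b (n + 2)) * PowerSeries.X) * hs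
        - PowerSeries.C (a (n + 2)) * PowerSeries.X ^ 2 * hr

/-- the polynomials `S_n = P_n + (v_0/v̂_0) P^{(1)}_{n-1}` are the
co-recursive sequence of parameter `α = -v_0/v̂_0` with respect to `v`, and the functional
`v^α` with SMOP `(S_n)` satisfies `v^α = (v^α_0/v_0)(v⁻¹ - (1/v̂_0)δ'_0)⁻¹`, i.e. the
moments of `v^α` convolved with `w_n = (v⁻¹)_n + (1/v̂_0)δ_{n,1}` give `(v^α_0/v_0)δ_{n,0}`. -/
theorem stmt_17 (v : ℕ → ℂ) (c : ℂ) (P : ℕ → Polynomial ℂ) (hP : IsSMOP v P)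
    (a b : ℕ → ℂ) (hrec : HasTTRR P a b) (ha : ∀ n, 1 ≤ n → a n ≠ 0) (hv0 : v 0 ≠ 0)
    (P1 : ℕ → Polynomial ℂ)
    (hP1 : HasTTRR P1 (fun n => a (n + 1)) (fun n => b (n + 1)))
    (vh : ℕ → ℂ) (hger : ∀ n, vh (n + 1) - c * vh n = v n) (hvh0 : vh 0 ≠ 0)
    (S : ℕ → Polynomial ℂ)
    (hS : ∀ n, S n = P n + C (v 0 / vh 0) * P1prev P1 n)
    (vα : ℕ → ℂ) (hvα : IsSMOP vα S)
    (vinv : ℕ → ℂ) (hinv : IsInverseMoments v vinv)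
    (w : ℕ → ℂ)
    (hw : ∀ n, w n = vinv n + (1 / vh 0) * (if n = 1 then 1 else 0)) :
    S 0 = 1 ∧ S 1 = P 1 - C (-(v 0) / vh 0)
    ∧ (∀ n, 1 ≤ n → X * S n = S (n + 1) + C (b n) * S n + C (a n) * S (n - 1))
    ∧ (∀ n, ∑ k ∈ Finset.range (n + 1), vα k * w (n - k)
          = vα 0 / v 0 * (if n = 0 then 1 else 0)) := by
  have hS0 : S 0 = 1 := by rw [hS, hrec.1]; simp [P1prev]
  have hS1 : S 1 = P 1 - C (-(v 0) / vh 0) := by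
    rw [hS]; simp [P1prev, hP1.1, neg_div]
  have hSr : ∀ n, 1 ≤ n → X * S n = S (n + 1) + C (b n) * S n + C (a n) * S (n - 1) := by
    intro n hn
    obtain ⟨m, rfl⟩ := Nat.exists_eq_add_of_le' hn
    have e := hrec.2.2 (m + 1) hn
    cases m with
    | zero =>
      have e1 := hP1.2.1
      simp only [hS, P1prev, zero_add, Nat.sub_self] at e e1 ⊢
      norm_num at e e1 ⊢
      linear_combination e + (C (v 0 / vh 0)) * e1
    | succ m =>
      have e1 := hP1.2.2 (m + 1) (by omega)
      simp only [hS, P1prev, Nat.add_sub_cancel, Nat.succ_ne_zero, if_false] at e e1 ⊢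
      linear_combination e + (C (v 0 / vh 0)) * e1
  refine ⟨hS0, hS1, hSr, ?_⟩
  have hST : HasTTRR S a (fun n => if n = 0 then b 0 - v 0 / vh 0 else b n) := by
    refine ⟨hS0, ?_, ?_⟩
    · have e := hrec.2.1
      rw [hS0, hS1]
      rw [hrec.1] at e
      simp only [if_true, neg_div, C_neg, C_sub]
      linear_combination e
    · intro n hn
      simp only [show n ≠ 0 by omega, if_false]
      exact hSr n hn
  have k1 := key v P P1 a b hP hrec hP1
  have k2 := key vα S P1 a _ hvα hST (by simpa using hP1)
  have hd1 := ttrr_deg P1 _ _ hP1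
  have main : PowerSeries.C (v 0) * PowerSeries.mk vα + PowerSeries.C (v 0 / vh 0) * PowerSeries.X *
      PowerSeries.mk vα * PowerSeries.mk v - PowerSeries.C (vα 0) * PowerSeries.mk v = 0 := by
    ext m
    rw [map_zero]
    obtain ⟨r, hr⟩ := k1 m
    obtain ⟨s, hs⟩ := k2 m
    have e : rs (m + 1) (S (m + 1)) = rs (m + 1) (P (m + 1)) +
        PowerSeries.C (v 0 / vh 0) * (PowerSeries.X * rs m (P1 m)) := by
      rw [hS, rs_add, rs_C_mul]
      simp only [P1prev, Nat.succ_ne_zero, if_false, Nat.add_sub_cancel]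
      rw [rs_succ m _ (hd1 m)]
    rw [e] at hs
    have hu : IsUnit (rs (m + 1) (P (m + 1))) := by
      rw [PowerSeries.isUnit_iff_constantCoeff]
      have h1 : (P (m + 1)).coeff (m + 1) = 1 := by
        have := hP.1 (m + 1)
        rwa [Monic, leadingCoeff, hP.2.1] at this
      rw [← PowerSeries.coeff_zero_eq_constantCoeff_apply]
      simp [rs, h1]
    have hdvd : (PowerSeries.X : PowerSeries ℂ) ^ (2 * (m + 1)) ∣
      (PowerSeries.C (v 0) * PowerSeries.mk vα + PowerSeries.C (v 0 / vh 0) * PowerSeries.X *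
      PowerSeries.mk vα * PowerSeries.mk v - PowerSeries.C (vα 0) * PowerSeries.mk v) *
        rs (m + 1) (P (m + 1)) := by
      refine ⟨PowerSeries.C (v 0) * s + PowerSeries.C (v 0 / vh 0) * PowerSeries.X *
        PowerSeries.mk vα * r - PowerSeries.C (vα 0) * r, ?_⟩
      linear_combination PowerSeries.C (v 0) * hs + (PowerSeries.C (v 0 / vh 0) * PowerSeries.X *
        PowerSeries.mk vα - PowerSeries.C (vα 0)) * hr
    rw [hu.dvd_mul_right, PowerSeries.X_pow_dvd_iff] at hdvd
    exact hdvd m (by omega)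
  have hI : PowerSeries.mk v * PowerSeries.mk vinv = 1 := by
    ext n
    rw [PowerSeries.coeff_mul, Finset.Nat.sum_antidiagonal_eq_sum_range_succ_mk,
      PowerSeries.coeff_one, ← hinv n]
    simp
  have hW : PowerSeries.mk w = PowerSeries.mk vinv + PowerSeries.C (1 / vh 0) * PowerSeries.X := by
    ext n
    rw [map_add, PowerSeries.coeff_C_mul, PowerSeries.coeff_X]
    simp [hw]
  have hfin : PowerSeries.mk vα * PowerSeries.mk w = PowerSeries.C (vα 0 / v 0) := by
    have c1 : (PowerSeries.C (v 0 / vh 0) : PowerSeries ℂ) =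
        PowerSeries.C (v 0) * PowerSeries.C (1 / vh 0) := by
      rw [← map_mul]; congr 1; ring
    have c2 : (PowerSeries.C (vα 0) : PowerSeries ℂ) =
        PowerSeries.C (v 0) * PowerSeries.C (vα 0 / v 0) := by
      rw [← map_mul]; congr 1; field_simp
    have c3 : (PowerSeries.C (v 0) : PowerSeries ℂ) ≠ 0 := by
      intro h; apply hv0; simpa using congrArg (PowerSeries.coeff 0) h
    apply mul_left_cancel₀ c3
    rw [hW, ← c2]
    rw [c1] at main
    linear_combination PowerSeries.mk vinv * main + (PowerSeries.C (vα 0) - PowerSeries.C (v 0) *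
      PowerSeries.C (1 / vh 0) * PowerSeries.X * PowerSeries.mk vα) * hI
  intro n
  have := congrArg (PowerSeries.coeff n) hfin
  rw [PowerSeries.coeff_mul, Finset.Nat.sum_antidiagonal_eq_sum_range_succ_mk,
    PowerSeries.coeff_C] at this
  simpa using this
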